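/- Let S be a point set of size q + k in PG(2,q), with q odd. (1) If k = 1, then the tangents to S at the points of type (1_1, 2_q) form a dual arc. (2) If k = 2, then S contains at most two points of type (2_{q+1}). (3) If k ≥ 3, then the k-secants of S containing a point of type (2_q, k_1) form a dual arc. -/

import Mathlib

/-! Common setup: the Desarguesian projective plane `PG(2,q)` over a finite field `F = GF(q)`.
Points are the projective points of `F³`; lines are the 2-dimensional linear subspaces of `F³`,
with incidence given by containment. -/

/-- Points of `PG(2,F)`. -/
abbrev PGPoint (F : Type*) [Field F] := Projectivization F (Fin 3 → F)

/-- Lines of `PG(2,F)`: the 2-dimensional linear subspaces of `F³`. -/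
abbrev PGLine (F : Type*) [Field F] := {W : Submodule F (Fin 3 → F) // Module.finrank F W = 2}

/-- Incidence between a point and a line of `PG(2,F)`. -/
def pgMem {F : Type*} [Field F] (P : PGPoint F) (L : PGLine F) : Prop :=
  P.submodule ≤ L.val

/-- The number of points of the point set `B` lying on the line `L`;
`L` is a *`k`-secant* of `B` if `nsec B L = k`, a *tangent* if `k = 1`,
a *bisecant* if `k = 2` and a *trisecant* if `k = 3`. -/
noncomputable def nsec {F : Type*} [Field F] (B : Set (PGPoint F)) (L : PGLine F) : ℕ :=
  {P ∈ B | pgMem P L}.ncard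

/-- A blocking set: a point set meeting every line. -/
def isBlocking {F : Type*} [Field F] (B : Set (PGPoint F)) : Prop :=
  ∀ L : PGLine F, ∃ P ∈ B, pgMem P L

/-- A minimal blocking set: every point is essential. -/
def isMinimalBlocking {F : Type*} [Field F] (B : Set (PGPoint F)) : Prop :=
  isBlocking B ∧ ∀ P ∈ B, ¬ isBlocking (B \ {P})

/-- `B` is a blocking set of Rédei type with Rédei line `ℓ`: a blocking set of size
`q + N ≤ 2q` such that `ℓ` meets `B` in exactly `N = |B| − q` points. -/
def isRedeiWithLine {F : Type*} [Field F] (q : ℕ) (B : Set (PGPoint F)) (ℓ : PGLine F) : Prop :=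
  isBlocking B ∧ B.ncard ≤ 2 * q ∧ nsec B ℓ + q = B.ncard

/-- A semioval: through each of its points there passes exactly one tangent. -/
def isSemioval {F : Type*} [Field F] (S : Set (PGPoint F)) : Prop :=
  ∀ P ∈ S, ∃! t : PGLine F, pgMem P t ∧ nsec S t = 1

/-- The point `P ∈ S` has type `(2_q, k_1)`: among the `q + 1` lines through `P`, exactly `q`
are bisecants of `S` and exactly one is a `k`-secant of `S`. -/
def hasType2qk1 {F : Type*} [Field F] (q k : ℕ) (S : Set (PGPoint F)) (P : PGPoint F) : Prop :=
  {L : PGLine F | pgMem P L ∧ nsec S L = 2}.ncard = q ∧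
  {L : PGLine F | pgMem P L ∧ nsec S L = k}.ncard = 1

open Module

section Incidence

variable {F : Type*} [Field F]

theorem pgMem_iff_rep_mem {P : PGPoint F} {L : PGLine F} : pgMem P L ↔ P.rep ∈ L.val := by
  rw [pgMem, Projectivization.submodule_eq, Submodule.span_singleton_le_iff_mem]

theorem linearIndependent_rep_pair {P Q : PGPoint F} (h : P ≠ Q) :
    LinearIndependent F ![P.rep, Q.rep] :=
  Projectivization.linearIndependent_pair_iff_ne.2 h

/-- The line joining two distinct points. -/
def joinLine (P Q : PGPoint F) (h : P ≠ Q) : PGLine F :=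
  ⟨Submodule.span F (Set.range ![P.rep, Q.rep]), by
    simpa using finrank_span_eq_card (linearIndependent_rep_pair h)⟩

theorem pgMem_joinLine_left {P Q : PGPoint F} (h : P ≠ Q) : pgMem P (joinLine P Q h) :=
  pgMem_iff_rep_mem.2 (Submodule.subset_span ⟨0, rfl⟩)

theorem pgMem_joinLine_right {P Q : PGPoint F} (h : P ≠ Q) : pgMem Q (joinLine P Q h) :=
  pgMem_iff_rep_mem.2 (Submodule.subset_span ⟨1, rfl⟩)

theorem eq_joinLine {P Q : PGPoint F} (h : P ≠ Q) {L : PGLine F} (hP : pgMem P L)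
    (hQ : pgMem Q L) : joinLine P Q h = L := by
  apply Subtype.ext
  apply Submodule.eq_of_le_of_finrank_eq
  · rw [joinLine, Submodule.span_le]
    rintro _ ⟨i, rfl⟩
    fin_cases i
    · exact pgMem_iff_rep_mem.1 hP
    · exact pgMem_iff_rep_mem.1 hQ
  · rw [(joinLine P Q h).2, L.2]

theorem line_eq_of_pgMem {P Q : PGPoint F} (h : P ≠ Q) {L M : PGLine F} (hPL : pgMem P L)
    (hQL : pgMem Q L) (hPM : pgMem P M) (hQM : pgMem Q M) : L = M :=
  (eq_joinLine h hPL hQL).symm.trans (eq_joinLine h hPM hQM)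

/-- Every line carries a point different from a given one. -/
theorem exists_ne_pgMem (P : PGPoint F) (L : PGLine F) : ∃ Q, Q ≠ P ∧ pgMem Q L := by
  by_contra! h
  have hle : L.val ≤ P.submodule := by
    intro v hv
    by_cases hv0 : v = 0
    · simp [hv0]
    · have hmem : pgMem (Projectivization.mk F v hv0) L := by
        rw [pgMem, Projectivization.submodule_mk, Submodule.span_singleton_le_iff_mem]
        exact hv
      have hP : Projectivization.mk F v hv0 = P := by
        by_contra hne
        exact h _ hne hmem
      rw [← hP, Projectivization.submodule_mk]
      exact Submodule.mem_span_singleton_self v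
  have := Submodule.finrank_mono hle
  rw [L.2, Projectivization.finrank_submodule] at this
  omega

/-- Three points not on a common line form a basis. -/
theorem exists_basis_of_not_collinear {P Q R : PGPoint F} (h : P ≠ Q)
    (hR : ¬ pgMem R (joinLine P Q h)) :
    ∃ b : Basis (Fin 3) F (Fin 3 → F), ∀ i, b i = (![R, P, Q] i).rep := by
  have hli : LinearIndependent F ![R.rep, P.rep, Q.rep] :=
    (linearIndependent_rep_pair h).finCons fun hmem => hR (pgMem_iff_rep_mem.2 hmem)
  refine ⟨basisOfLinearIndependentOfCardEqFinrank hli (by simp), fun i => ?_⟩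
  rw [coe_basisOfLinearIndependentOfCardEqFinrank]
  fin_cases i <;> rfl

/-- The line cut out by a nonzero linear form. -/
def kerLine (f : (Fin 3 → F) →ₗ[F] F) (hf : f ≠ 0) : PGLine F :=
  ⟨LinearMap.ker f, by
    have h := Module.Dual.finrank_ker_add_one_of_ne_zero hf
    rw [finrank_fin_fun] at h
    omega⟩

theorem pgMem_kerLine {f : (Fin 3 → F) →ₗ[F] F} {hf : f ≠ 0} {P : PGPoint F} :
    pgMem P (kerLine f hf) ↔ f P.rep = 0 := by
  rw [pgMem_iff_rep_mem, kerLine, LinearMap.mem_ker]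

theorem exists_basis_zero_eq_rep (P : PGPoint F) :
    ∃ b : Basis (Fin 3) F (Fin 3 → F), b 0 = P.rep := by
  have h₁ : LinearIndependent F ![P.rep] := by
    simpa using P.rep_nonzero
  obtain ⟨x, hx⟩ := exists_linearIndependent_snoc_of_lt_finrank h₁ (by simp)
  obtain ⟨y, hy⟩ := exists_linearIndependent_snoc_of_lt_finrank hx (by simp)
  refine ⟨basisOfLinearIndependentOfCardEqFinrank hy (by simp), ?_⟩
  rw [coe_basisOfLinearIndependentOfCardEqFinrank]
  rfl

/-- The lines through a point are parametrized by the projective line over `F`. -/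
theorem lines_through_subset_range (P : PGPoint F) :
    ∃ g : Option F → PGLine F, {L : PGLine F | pgMem P L} ⊆ Set.range g := by
  obtain ⟨b, hb⟩ := exists_basis_zero_eq_rep P
  have h2 : b.coord 2 ≠ 0 := fun h => by simpa using LinearMap.congr_fun h (b 2)
  have h1 : ∀ a : F, b.coord 1 - a • b.coord 2 ≠ 0 := fun a h => by
    simpa using LinearMap.congr_fun h (b 1)
  refine ⟨fun o => o.elim (kerLine _ h2) fun a => kerLine _ (h1 a), fun L hL => ?_⟩
  obtain ⟨Q, hQP, hQL⟩ := exists_ne_pgMem P L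
  by_cases hz : b.coord 2 Q.rep = 0
  · refine ⟨none, line_eq_of_pgMem hQP ?_ ?_ hQL hL⟩
    · exact (pgMem_kerLine (hf := h2)).2 hz
    · exact (pgMem_kerLine (hf := h2)).2 (by simp [← hb])
  · refine ⟨some (b.coord 1 Q.rep / b.coord 2 Q.rep), line_eq_of_pgMem hQP ?_ ?_ hQL hL⟩
    · refine (pgMem_kerLine (hf := h1 _)).2 ?_
      simp only [LinearMap.sub_apply, LinearMap.smul_apply, smul_eq_mul]
      field_simp
      ring
    · exact (pgMem_kerLine (hf := h1 _)).2 (by simp [← hb])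

theorem finite_lines_through [Fintype F] (P : PGPoint F) : {L : PGLine F | pgMem P L}.Finite :=
  let ⟨g, hg⟩ := lines_through_subset_range P
  (Set.finite_range g).subset hg

theorem ncard_lines_through_le [Fintype F] (P : PGPoint F) :
    {L : PGLine F | pgMem P L}.ncard ≤ Fintype.card F + 1 := by
  obtain ⟨g, hg⟩ := lines_through_subset_range P
  calc _ ≤ (Set.range g).ncard := Set.ncard_le_ncard hg (Set.finite_range g)
    _ ≤ (Set.univ : Set (Option F)).ncard := by
      rw [← Set.image_univ]; exact Set.ncard_image_le Set.finite_univ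
    _ = Fintype.card F + 1 := by simp [Set.ncard_univ]

end Incidence

section Segre

variable {F : Type*} [Field F]

/-- If a nowhere vanishing function takes each value other than `0` and `1` exactly once, then
the product of its values is `-1`. -/
theorem prod_eq_neg_one_of_existsUnique [Fintype F] {α : Type*} (s : Finset α) (f : α → F)
    (h0 : ∀ x ∈ s, f x ≠ 0) (h1 : ∀ a : F, a ≠ 0 → a ≠ 1 → ∃! x, x ∈ s ∧ f x = a) :
    ∏ x ∈ s, f x = -1 := by
  classical
  have hu : ∏ a : Fˣ, (a : F) = -1 := by
    have h := congrArg (Units.val) (FiniteField.prod_univ_units_id_eq_neg_one (K := F))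
    simpa using h
  rw [← hu, ← Finset.prod_filter_ne_one, ← Finset.prod_filter_ne_one (s := Finset.univ)]
  refine Finset.prod_bij' (fun x hx => Units.mk0 (f x) (h0 x (Finset.mem_filter.1 hx).1))
    (fun a ha => (h1 a a.ne_zero (Finset.mem_filter.1 ha).2).choose) ?_ ?_ ?_ ?_ ?_
  · intro x hx
    exact Finset.mem_filter.2 ⟨Finset.mem_univ _, (Finset.mem_filter.1 hx).2⟩
  · intro a ha
    have h := (h1 a a.ne_zero (Finset.mem_filter.1 ha).2).choose_spec.1
    rw [Finset.mem_filter, h.2]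
    exact ⟨h.1, (Finset.mem_filter.1 ha).2⟩
  · intro x hx
    have hx' := Finset.mem_filter.1 hx
    exact ((h1 (f x) (h0 x hx'.1) hx'.2).choose_spec.2 x ⟨hx'.1, rfl⟩).symm
  · intro a ha
    exact Units.ext (h1 a a.ne_zero (Finset.mem_filter.1 ha).2).choose_spec.1.2
  · intro x hx
    rfl

theorem eq_of_nsec_eq_two {S : Set (PGPoint F)} {L : PGLine F} (h : nsec S L = 2)
    {P Q R : PGPoint F} (hP : P ∈ S ∧ pgMem P L) (hQ : Q ∈ S ∧ pgMem Q L)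
    (hR : R ∈ S ∧ pgMem R L) (hPQ : P ≠ Q) (hPR : P ≠ R) : Q = R := by
  obtain ⟨x, y, -, hxy⟩ := Set.ncard_eq_two.1 h
  have mem : ∀ Z, Z ∈ S ∧ pgMem Z L → Z = x ∨ Z = y := fun Z hZ => by
    have : Z ∈ {P ∈ S | pgMem P L} := hZ
    simpa [hxy] using this
  have hP' := mem P hP
  have hQ' := mem Q hQ
  have hR' := mem R hR
  grind

theorem exists_ne_of_nsec_eq_two {S : Set (PGPoint F)} {L : PGLine F} (h : nsec S L = 2)
    (P : PGPoint F) : ∃ Q ≠ P, Q ∈ S ∧ pgMem Q L := by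
  obtain ⟨Q, hQ, hne⟩ := Set.exists_ne_of_one_lt_ncard (h ▸ one_lt_two : 1 < nsec S L) P
  exact ⟨Q, hne, hQ⟩

/-- Segre's product argument: in odd order, there is no triangle of points of `S` such that, for
some point `C` off its sides, all lines through a vertex and not through `C` are bisecants.
The triangle is the fundamental triangle and `C` the unit point for the linear forms `g`. -/
theorem false_of_triangle [Fintype F] (hodd : Odd (Fintype.card F)) {S : Set (PGPoint F)}
    (hS : S.Finite) (P : Fin 3 → PGPoint F) (C : PGPoint F) (hP : ∀ i, P i ∈ S)
    (g : Fin 3 → (Fin 3 → F) →ₗ[F] F) (hC : ∀ i, g i C.rep = 1)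
    (hne : ∀ i, g i (P i).rep ≠ 0) (hg : ∀ i j, i ≠ j → g i (P j).rep = 0)
    (hbi : ∀ i L, pgMem (P i) L → ¬ pgMem C L → nsec S L = 2) : False := by
  classical
  have hinj : ∀ i j, i ≠ j → P i ≠ P j := fun i j hij h => hne i (by rw [h, hg i j hij])
  have hsucc : ∀ i : Fin 3, i ≠ i + 1 ∧ i ≠ i + 2 ∧ i + 1 ≠ i + 2 := by decide
  have hcases : ∀ i j : Fin 3, j = i ∨ j = i + 1 ∨ j = i + 2 := by decide
  set s : Finset (PGPoint F) := {R ∈ hS.toFinset | ∀ j, R ≠ P j} with hs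
  have mem_s : ∀ R, R ∈ s ↔ R ∈ S ∧ ∀ j, R ≠ P j := fun R => by simp [hs]
  have hg0 : ∀ i, g i ≠ 0 := fun i h => hne i (by simp [h])
  have hcoord : ∀ R ∈ s, ∀ i, g i R.rep ≠ 0 := by
    intro R hR i h
    obtain ⟨hRS, hRP⟩ := (mem_s R).1 hR
    obtain ⟨h1, h2, h12⟩ := hsucc i
    have hL : nsec S (kerLine (g i) (hg0 i)) = 2 := by
      refine hbi (i + 1) _ (pgMem_kerLine.2 (hg _ _ h1)) fun hmem => ?_
      rw [pgMem_kerLine, hC] at hmem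
      exact one_ne_zero hmem
    exact hinj _ _ h12 (eq_of_nsec_eq_two hL ⟨hRS, pgMem_kerLine.2 h⟩
      ⟨hP _, pgMem_kerLine.2 (hg _ _ h1)⟩ ⟨hP _, pgMem_kerLine.2 (hg _ _ h2)⟩ (hRP _) (hRP _))
  have hprod : ∀ i, ∏ R ∈ s, g (i + 1) R.rep / g (i + 2) R.rep = -1 := by
    intro i
    obtain ⟨h1, h2, h12⟩ := hsucc i
    refine prod_eq_neg_one_of_existsUnique s _
      (fun R hR => div_ne_zero (hcoord R hR _) (hcoord R hR _)) fun a ha0 ha1 => ?_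
    have hf : g (i + 1) - a • g (i + 2) ≠ 0 := fun h => by
      have := LinearMap.congr_fun h (P (i + 1)).rep
      simp [hg _ _ h12.symm, hne] at this
    have hPi : pgMem (P i) (kerLine _ hf) :=
      pgMem_kerLine.2 (by simp [hg _ _ h1.symm, hg _ _ h2.symm])
    have hL : nsec S (kerLine _ hf) = 2 := by
      refine hbi i _ hPi fun hmem => ha1 ?_
      rw [pgMem_kerLine] at hmem
      simp only [LinearMap.sub_apply, LinearMap.smul_apply, hC, smul_eq_mul, mul_one] at hmem
      exact (sub_eq_zero.1 hmem).symm
    have hiff : ∀ R ∈ s, g (i + 1) R.rep / g (i + 2) R.rep = a ↔ pgMem R (kerLine _ hf) := by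
      intro R hR
      rw [pgMem_kerLine, div_eq_iff (hcoord R hR _)]
      simp [sub_eq_zero]
    obtain ⟨R, hRi, hRS, hRL⟩ := exists_ne_of_nsec_eq_two hL (P i)
    have hRs : R ∈ s := by
      refine (mem_s R).2 ⟨hRS, fun j hj => ?_⟩
      rw [pgMem_kerLine] at hRL
      rcases hcases i j with rfl | rfl | rfl
      · exact hRi hj
      · simp [hj, hg _ _ h12.symm, hne] at hRL
      · simp [hj, hg _ _ h12, hne, ha0] at hRL
    refine ⟨R, ⟨hRs, (hiff R hRs).2 hRL⟩, fun Q ⟨hQs, hQ⟩ => ?_⟩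
    obtain ⟨hQS, hQP⟩ := (mem_s Q).1 hQs
    exact eq_of_nsec_eq_two hL ⟨hP i, hPi⟩ ⟨hQS, (hiff Q hQs).1 hQ⟩ ⟨hRS, hRL⟩ (hQP i).symm
      hRi.symm
  have hone : (∏ R ∈ s, g (0 + 1) R.rep / g (0 + 2) R.rep) *
      (∏ R ∈ s, g (1 + 1) R.rep / g (1 + 2) R.rep) *
      (∏ R ∈ s, g (2 + 1) R.rep / g (2 + 2) R.rep) = 1 := by
    rw [← Finset.prod_mul_distrib, ← Finset.prod_mul_distrib]
    refine Finset.prod_eq_one fun R hR => ?_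
    have h0 := hcoord R hR 0
    have h1 := hcoord R hR 1
    have h2 := hcoord R hR 2
    change g 1 R.rep / g 2 R.rep * (g 2 R.rep / g 0 R.rep) * (g 0 R.rep / g 1 R.rep) = 1
    field_simp
  rw [hprod, hprod, hprod] at hone
  have hchar : ringChar F ≠ 2 := fun h => by
    have := FiniteField.even_card_iff_char_two.1 h
    rw [Nat.odd_iff] at hodd
    omega
  exact Ring.neg_one_ne_one_of_char_ne_two hchar (by simpa using hone)

/-- A version of `false_of_triangle` in terms of the basis formed by the vertices. -/
theorem false_of_basis [Fintype F] (hodd : Odd (Fintype.card F)) {S : Set (PGPoint F)}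
    (hS : S.Finite) (P : Fin 3 → PGPoint F) (hP : ∀ i, P i ∈ S) (C : PGPoint F)
    (b : Basis (Fin 3) F (Fin 3 → F)) (hb : ∀ i, b i = (P i).rep)
    (hC : ∀ i, b.coord i C.rep ≠ 0)
    (hbi : ∀ i L, pgMem (P i) L → ¬ pgMem C L → nsec S L = 2) : False := by
  refine false_of_triangle hodd hS P C hP (fun i => (b.coord i C.rep)⁻¹ • b.coord i)
    (fun i => by simpa using inv_mul_cancel₀ (hC i)) (fun i => ?_) (fun i j hij => ?_) hbi
  · simpa [← hb] using hC i
  · simp [← hb, hij]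

/-- If `q` of the lines through `P` are bisecants, then so are all lines through `P` other than
a given line through `P` which is not a bisecant. -/
theorem nsec_eq_two_of_ne [Fintype F] {S : Set (PGPoint F)} {P : PGPoint F} {t : PGLine F}
    (hPt : pgMem P t) (ht : nsec S t ≠ 2)
    (h : {L : PGLine F | pgMem P L ∧ nsec S L = 2}.ncard = Fintype.card F)
    {L : PGLine F} (hL : pgMem P L) (hne : L ≠ t) : nsec S L = 2 := by
  have hfin : {L : PGLine F | pgMem P L ∧ nsec S L = 2}.Finite :=
    (finite_lines_through P).subset fun _ h => h.1
  have heq : insert t {L : PGLine F | pgMem P L ∧ nsec S L = 2} = {L | pgMem P L} := by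
    refine Set.eq_of_subset_of_ncard_le ?_ ?_ (finite_lines_through P)
    · exact Set.insert_subset hPt fun _ h => h.1
    · rw [Set.ncard_insert_of_notMem (fun h => ht h.2) hfin, h]
      exact ncard_lines_through_le P
  have hmem : L ∈ insert t {L : PGLine F | pgMem P L ∧ nsec S L = 2} := heq ▸ hL
  exact (hmem.resolve_left hne).2

theorem nsec_eq_two_of_ncard_eq_add_one [Fintype F] {S : Set (PGPoint F)} {P : PGPoint F}
    (h : {L : PGLine F | pgMem P L ∧ nsec S L = 2}.ncard = Fintype.card F + 1)
    {L : PGLine F} (hL : pgMem P L) : nsec S L = 2 := by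
  have heq : {L : PGLine F | pgMem P L ∧ nsec S L = 2} = {L | pgMem P L} :=
    Set.eq_of_subset_of_ncard_le (fun _ h => h.1) (h ▸ ncard_lines_through_le P)
      (finite_lines_through P)
  have hmem : L ∈ {L : PGLine F | pgMem P L ∧ nsec S L = 2} := heq ▸ hL
  exact hmem.2

/-- Three non-bisecants, each through a point of `S` all of whose other lines are bisecants,
are not concurrent. -/
theorem not_concurrent [Fintype F] (hodd : Odd (Fintype.card F)) {S : Set (PGPoint F)}
    (hS : S.Finite) (t : Fin 3 → PGLine F) (ht : ∀ i j, i ≠ j → t i ≠ t j)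
    (hnsec : ∀ i, nsec S (t i) ≠ 2)
    (h : ∀ i, ∃ P ∈ S, pgMem P (t i) ∧
      {L : PGLine F | pgMem P L ∧ nsec S L = 2}.ncard = Fintype.card F)
    (C : PGPoint F) (hC : ∀ i, pgMem C (t i)) : False := by
  choose P hPS hPt hcard using h
  have hbi : ∀ i L, pgMem (P i) L → L ≠ t i → nsec S L = 2 := fun i L hL hne =>
    nsec_eq_two_of_ne (hPt i) (hnsec i) (hcard i) hL hne
  have hoff : ∀ i j, i ≠ j → ¬ pgMem (P i) (t j) := fun i j hij hmem =>
    hnsec j (hbi i _ hmem (ht j i hij.symm))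
  have hinj : ∀ i j, i ≠ j → P i ≠ P j := fun i j hij heq => hoff i j hij (heq ▸ hPt j)
  have hsucc : ∀ i : Fin 3, i ≠ i + 1 ∧ i ≠ i + 2 ∧ i + 1 ≠ i + 2 := by decide
  have h12 : P 1 ≠ P 2 := hinj 1 2 (by decide)
  have hnc : ¬ pgMem (P 0) (joinLine (P 1) (P 2) h12) := fun hmem => by
    have hL : nsec S (joinLine (P 1) (P 2) h12) = 2 :=
      hbi 1 _ (pgMem_joinLine_left h12) fun heq =>
        hoff 2 1 (by decide) (heq ▸ pgMem_joinLine_right h12)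
    exact h12 (eq_of_nsec_eq_two hL ⟨hPS 0, hmem⟩ ⟨hPS 1, pgMem_joinLine_left h12⟩
      ⟨hPS 2, pgMem_joinLine_right h12⟩ (hinj 0 1 (by decide)) (hinj 0 2 (by decide)))
  obtain ⟨b, hb⟩ := exists_basis_of_not_collinear h12 hnc
  have hb' : ∀ i, b i = (P i).rep := fun i => by
    rw [hb]
    fin_cases i <;> rfl
  refine false_of_basis hodd hS P hPS C b hb' (fun i hi => ?_) fun i L hL hCL =>
    hbi i L hL fun heq => hCL (heq ▸ hC i)
  obtain ⟨hi1, hi2, hi12⟩ := hsucc i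
  have hf : b.coord i ≠ 0 := fun h => by simpa using LinearMap.congr_fun h (b i)
  have hside : ∀ j, i ≠ j → pgMem (P j) (kerLine (b.coord i) hf) := fun j hij =>
    pgMem_kerLine.2 (by simp [← hb', hij])
  have hCP : C ≠ P (i + 1) := fun heq => hoff _ _ hi12 (heq ▸ hC (i + 2))
  have heq : kerLine (b.coord i) hf = t (i + 1) :=
    line_eq_of_pgMem hCP (pgMem_kerLine.2 hi) (hside _ hi1) (hC _) (hPt _)
  exact hoff _ _ hi12.symm (heq ▸ hside _ hi2)

/-- At most two points of `S` have only bisecants passing through them. -/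
theorem ncard_all_bisecant_le_two [Fintype F] (hodd : Odd (Fintype.card F))
    {S : Set (PGPoint F)} (hS : S.Finite) :
    {P ∈ S | {L : PGLine F | pgMem P L ∧ nsec S L = 2}.ncard = Fintype.card F + 1}.ncard
      ≤ 2 := by
  by_contra! hlt
  obtain ⟨x, ⟨hxS, hx⟩, y, ⟨hyS, hy⟩, z, ⟨hzS, hz⟩, hxy, hxz, hyz⟩ :=
    (Set.two_lt_ncard (hS.subset fun _ h => h.1)).1 hlt
  have hnc : ¬ pgMem x (joinLine y z hyz) := fun hmem =>
    hyz (eq_of_nsec_eq_two (nsec_eq_two_of_ncard_eq_add_one hx hmem) ⟨hxS, hmem⟩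
      ⟨hyS, pgMem_joinLine_left hyz⟩ ⟨hzS, pgMem_joinLine_right hyz⟩ hxy hxz)
  obtain ⟨b, hb⟩ := exists_basis_of_not_collinear hyz hnc
  have hcoord : ∀ i, b.coord i (∑ j, b j) = 1 := fun i => by
    simp [Finsupp.single_apply]
  have hv : ∑ j, b j ≠ 0 := fun h => by simpa [h] using hcoord 0
  obtain ⟨a, ha⟩ := Projectivization.exists_smul_eq_mk_rep F _ hv
  refine false_of_basis hodd hS ![x, y, z] ?_ (Projectivization.mk F _ hv) b hb ?_ ?_
  · simp [Fin.forall_fin_succ, hxS, hyS, hzS]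
  · intro i
    rw [← ha, Units.smul_def, map_smul, hcoord]
    simp
  · intro i L hL _
    fin_cases i
    exacts [nsec_eq_two_of_ncard_eq_add_one hx hL, nsec_eq_two_of_ncard_eq_add_one hy hL,
      nsec_eq_two_of_ncard_eq_add_one hz hL]

end Segre

/-- Let `S` be a point set of size `q + k` in `PG(2,q)`, `q` odd.
(1) If `k = 1`, then the tangents to `S` at the points of type `(1_1, 2_q)` form a dual arc
    (no three of these lines are concurrent).
(2) If `k = 2`, then `S` contains at most two points of type `(2_{q+1})`.
(3) If `k ≥ 3`, then the `k`-secants of `S` containing a point of type `(2_q, k_1)` form a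
    dual arc. -/
theorem stmt_14 {F : Type*} [Field F] [Fintype F] (q : ℕ) (hq : Fintype.card F = q)
    (hqodd : Odd q) (k : ℕ)
    (S : Set (PGPoint F)) (hsize : S.ncard = q + k) :
    -- (1)
    (k = 1 →
      ∀ T : Set (PGLine F),
        T = {t : PGLine F | nsec S t = 1 ∧ ∃ P ∈ S, pgMem P t ∧
              {L : PGLine F | pgMem P L ∧ nsec S L = 1}.ncard = 1 ∧
              {L : PGLine F | pgMem P L ∧ nsec S L = 2}.ncard = q} →
        ∀ t₁ ∈ T, ∀ t₂ ∈ T, ∀ t₃ ∈ T, t₁ ≠ t₂ → t₁ ≠ t₃ → t₂ ≠ t₃ →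
          ¬ ∃ C : PGPoint F, pgMem C t₁ ∧ pgMem C t₂ ∧ pgMem C t₃) ∧
    -- (2)
    (k = 2 →
      {P ∈ S | {L : PGLine F | pgMem P L ∧ nsec S L = 2}.ncard = q + 1}.ncard ≤ 2) ∧
    -- (3)
    (3 ≤ k →
      ∀ T : Set (PGLine F),
        T = {m : PGLine F | nsec S m = k ∧ ∃ P ∈ S, pgMem P m ∧ hasType2qk1 q k S P} →
        ∀ t₁ ∈ T, ∀ t₂ ∈ T, ∀ t₃ ∈ T, t₁ ≠ t₂ → t₁ ≠ t₃ → t₂ ≠ t₃ →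
          ¬ ∃ C : PGPoint F, pgMem C t₁ ∧ pgMem C t₂ ∧ pgMem C t₃) := by
  subst hq
  have hS : S.Finite := Set.finite_of_ncard_pos (by rw [hsize]; have := hqodd.pos; omega)
  have key : k ≠ 2 → ∀ t₁ t₂ t₃ : PGLine F,
      (∀ t ∈ ({t₁, t₂, t₃} : Set (PGLine F)), nsec S t = k ∧ ∃ P ∈ S, pgMem P t ∧
        {L : PGLine F | pgMem P L ∧ nsec S L = 2}.ncard = Fintype.card F) →
      t₁ ≠ t₂ → t₁ ≠ t₃ → t₂ ≠ t₃ →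
      ¬ ∃ C : PGPoint F, pgMem C t₁ ∧ pgMem C t₂ ∧ pgMem C t₃ := by
    rintro hk t₁ t₂ t₃ h h₁₂ h₁₃ h₂₃ ⟨C, h₁, h₂, h₃⟩
    have ht : ∀ i, ![t₁, t₂, t₃] i ∈ ({t₁, t₂, t₃} : Set (PGLine F)) := by
      simp [Fin.forall_fin_succ]
    refine not_concurrent hqodd hS ![t₁, t₂, t₃] ?_ (fun i => (h _ (ht i)).1 ▸ hk)
      (fun i => (h _ (ht i)).2) C ?_
    · simp [Fin.forall_fin_succ, h₁₂, h₁₃, h₂₃, h₁₂.symm, h₁₃.symm, h₂₃.symm]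
    · simp [Fin.forall_fin_succ, h₁, h₂, h₃]
  refine ⟨?_, fun _ => ncard_all_bisecant_le_two hqodd hS, ?_⟩
  · rintro rfl T rfl t₁ ⟨h₁, P₁, hP₁, hm₁, -, hc₁⟩ t₂ ⟨h₂, P₂, hP₂, hm₂, -, hc₂⟩
      t₃ ⟨h₃, P₃, hP₃, hm₃, -, hc₃⟩
    refine key (by omega) t₁ t₂ t₃ ?_
    rintro t (rfl | rfl | rfl)
    exacts [⟨h₁, P₁, hP₁, hm₁, hc₁⟩, ⟨h₂, P₂, hP₂, hm₂, hc₂⟩, ⟨h₃, P₃, hP₃, hm₃, hc₃⟩]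
  · rintro hk T rfl t₁ ⟨h₁, P₁, hP₁, hm₁, hc₁, -⟩ t₂ ⟨h₂, P₂, hP₂, hm₂, hc₂, -⟩
      t₃ ⟨h₃, P₃, hP₃, hm₃, hc₃, -⟩
    refine key (by omega) t₁ t₂ t₃ ?_
    rintro t (rfl | rfl | rfl)
    exacts [⟨h₁, P₁, hP₁, hm₁, hc₁⟩, ⟨h₂, P₂, hP₂, hm₂, hc₂⟩, ⟨h₃, P₃, hP₃, hm₃, hc₃⟩]
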